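/- Let M be the ℤ-lattice U(2) ⊕ E₈(−2), and let g be an isometry of M whose characteristic polynomial equals Φ₁₅ · Φ₁². Then M is the internal orthogonal direct sum of M₁₅ := ker Φ₁₅(g) and M₁ := ker(g − id); moreover M₁₅ is isometric to E₈(−2) and M₁ is isometric to U(2). -/

import Mathlib

/-!
Since `Φ₁₅(1) = 1`, the polynomials `Φ₁₅` and `(X - 1) ^ 2` are coprime over `ℤ`, so `M` is the direct
sum of `A = ker Φ₁₅(g)` and `K = ker (g - 1) ^ 2`, and comparing characteristic polynomials shows
that `K` has rank two (`finrank_eq_two_of_charpoly`). For `g y = y` and any polynomial `q`,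
`⟨q(g) x, y⟩ = q(1) ⟨x, y⟩` (`MBilin_aeval`); with `q = Φ₁₅` this shows that `A` is orthogonal to
`ker (g - 1)`. A unipotent isometry of a nondegenerate plane is trivial, whence `K = ker (g - 1)`
(`apply_eq_self_of_unipotent`), and the sum `A ⊕ K` is orthogonal.

The lattice `M(1/2) = U ⊕ E₈(-1)` is even and unimodular, hence so is `K(1/2)`. A binary even
unimodular lattice has determinant `-1`, since `1` is excluded modulo `4`; its quadratic form is then
a product of two integral linear forms, and `K ≅ U(2)` (`exists_hyperbolic_pair`).

To identify `A` without a classification of unimodular lattices, let `e, e'` be a hyperbolic basis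
of `K`. The complement of any isotropic vector of `M` contains a copy of `E₈(-2)`
(`exists_E8_orthogonal`): Eichler transvections and the swap of the coordinates of `U(2)` bring the
vector to the line of a basis vector of `U(2)` by a Euclidean descent, which terminates because the
covering radius of `E₈` is less than `√2` (`exists_e8Form_lt`). Subtracting multiples of `e` moves
this copy, for the vector `e`, into the complement of `K`, which is `A`. Together with `e, e'` it has
the Gram matrix of `M`, so it generates `A` by comparison of determinants (`isometricTo_E8`).
-/

open Module Polynomial Matrix

/-- Index type for the rank-10 lattice `M = U(2) ⊕ E₈(-2)`. -/
abbrev J10 : Type := Fin 2 ⊕ Fin 8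

/-- Gram matrix of the hyperbolic plane `U`. -/
def UGram : Matrix (Fin 2) (Fin 2) ℤ := !![0, 1; 1, 0]

/-- Gram matrix of the lattice `M = U(2) ⊕ E₈(-2)`. -/
def MGram : Matrix J10 J10 ℤ :=
  Matrix.fromBlocks ((2 : ℤ) • UGram) 0 0 ((-2 : ℤ) • CartanMatrix.E₈)

/-- The bilinear form of the lattice `M = U(2) ⊕ E₈(-2)` on `J10 → ℤ`. -/
noncomputable def MBilin : LinearMap.BilinForm ℤ (J10 → ℤ) := Matrix.toBilin' MGram

/-- The sublattice `S` of `M`, with the restricted form, is isometric to the `ℤ`-lattice with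
Gram matrix `G`: there is a basis of `S` whose Gram matrix is `G`. -/
def IsometricTo {ι : Type} [Fintype ι] (S : Submodule ℤ (J10 → ℤ)) (G : Matrix ι ι ℤ) : Prop :=
  ∃ b : Basis ι ℤ ↥S, ∀ i j, MBilin (b i).1 (b j).1 = G i j

/-! ### The lattices `E₈` and `M` in coordinates -/

/-- The bilinear form of the lattice `E₈` in simple-root coordinates. -/
def e8Form (v w : Fin 8 → ℤ) : ℤ := v ⬝ᵥ (CartanMatrix.E₈ *ᵥ w)

lemma e8Form_apply (v w : Fin 8 → ℤ) : e8Form v w =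
    2 * (v 0 * w 0 + v 1 * w 1 + v 2 * w 2 + v 3 * w 3 + v 4 * w 4 + v 5 * w 5 + v 6 * w 6
      + v 7 * w 7)
    - (v 0 * w 2 + v 2 * w 0) - (v 1 * w 3 + v 3 * w 1) - (v 2 * w 3 + v 3 * w 2)
    - (v 3 * w 4 + v 4 * w 3) - (v 4 * w 5 + v 5 * w 4) - (v 5 * w 6 + v 6 * w 5)
    - (v 6 * w 7 + v 7 * w 6) := by
  simp [e8Form, CartanMatrix.E₈, dotProduct, mulVec, Fin.sum_univ_eight]
  ring

lemma MBilin_apply (x y : J10 → ℤ) : MBilin x y =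
    2 * (x (.inl 0) * y (.inl 1) + x (.inl 1) * y (.inl 0))
      - 2 * e8Form (fun i => x (.inr i)) (fun i => y (.inr i)) := by
  rw [MBilin, Matrix.toBilin'_apply', e8Form_apply]
  simp [MGram, UGram, CartanMatrix.E₈, dotProduct, mulVec, Fin.sum_univ_eight, Fin.sum_univ_two,
    Fintype.sum_sum_type]
  ring

lemma MBilin_comm (x y : J10 → ℤ) : MBilin x y = MBilin y x := by
  simp only [MBilin_apply, e8Form_apply]; ring

/-- Half the norm on `E₈`, which is integral because `E₈` is even. -/
def e8HalfNorm (v : Fin 8 → ℤ) : ℤ :=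
  v 0 ^ 2 + v 1 ^ 2 + v 2 ^ 2 + v 3 ^ 2 + v 4 ^ 2 + v 5 ^ 2 + v 6 ^ 2 + v 7 ^ 2
    - v 0 * v 2 - v 1 * v 3 - v 2 * v 3 - v 3 * v 4 - v 4 * v 5 - v 5 * v 6 - v 6 * v 7

lemma e8Form_self (v : Fin 8 → ℤ) : e8Form v v = 2 * e8HalfNorm v := by
  rw [e8Form_apply, e8HalfNorm]; ring

/-- Twice the standard Euclidean coordinates of the `E₈`-vector with simple-root coordinates `w`,
for the realization of the simple roots in `ℝ⁸` used by Bourbaki. -/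
def e8Coord (w : Fin 8 → ℤ) : Fin 8 → ℤ :=
  ![w 0 + 2 * w 1 - 2 * w 2, -w 0 + 2 * w 1 + 2 * w 2 - 2 * w 3, -w 0 + 2 * w 3 - 2 * w 4,
    -w 0 + 2 * w 4 - 2 * w 5, -w 0 + 2 * w 5 - 2 * w 6, -w 0 + 2 * w 6 - 2 * w 7,
    -w 0 + 2 * w 7, w 0]

lemma sum_e8Coord_sq (w : Fin 8 → ℤ) : ∑ i, e8Coord w i ^ 2 = 4 * e8Form w w := by
  simp [Fin.sum_univ_eight, e8Coord, e8Form_apply]; ring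

lemma e8Coord_sub_smul (v w : Fin 8 → ℤ) (m : ℤ) (i : Fin 8) :
    e8Coord (v - m • w) i = e8Coord v i - m * e8Coord w i := by
  fin_cases i <;> simp [e8Coord] <;> ring

lemma eq_zero_of_e8Form_self (v : Fin 8 → ℤ) (h : e8Form v v = 0) : v = 0 := by
  have h1 := sum_e8Coord_sq v
  rw [h, mul_zero, Finset.sum_eq_zero_iff_of_nonneg (fun _ _ => sq_nonneg _)] at h1
  have h2 : ∀ i, e8Coord v i = 0 := fun i => by simpa using h1 i (Finset.mem_univ i)
  simp [e8Coord, Fin.forall_fin_succ] at h2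
  ext i
  fin_cases i <;> simp <;> omega

/-! ### The covering radius of `E₈` -/

/-- A vector with integral doubled coordinates lies in `E₈` as soon as these coordinates have the
same parity and their sum is divisible by `4`. -/
lemma exists_e8Coord_eq (z : Fin 8 → ℤ) (hz : ∀ i, 2 ∣ z i - z 7) (hs : 4 ∣ ∑ i, z i) :
    ∃ w, e8Coord w = z := by
  choose a ha using hz
  rw [Fin.sum_univ_eight] at hs
  have h0 := ha 0; have h1 := ha 1; have h2 := ha 2; have h3 := ha 3; have h4 := ha 4
  have h5 := ha 5; have h6 := ha 6
  -- `b3` and `b1` are the coefficients of the simple roots `3` and `1` (counting from `0`); the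
  -- hypothesis on the sum is what makes `b1` integral
  obtain ⟨b3, hb3⟩ : ∃ b3, b3 = a 2 + a 3 + a 4 + a 5 + a 6 + 5 * z 7 := ⟨_, rfl⟩
  obtain ⟨b1, hb1⟩ : ∃ b1, z 0 + z 1 + 2 * b3 = 4 * b1 := by
    have : 4 ∣ z 0 + z 1 + 2 * b3 := by omega
    exact this
  refine ⟨![z 7, b1, (z 7 + 2 * b1 - z 0) / 2, b3, a 3 + a 4 + a 5 + a 6 + 4 * z 7,
    a 4 + a 5 + a 6 + 3 * z 7, a 5 + a 6 + 2 * z 7, a 6 + z 7], ?_⟩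
  ext i
  fin_cases i <;> simp [e8Coord] <;> omega

/-- The covering radius of `E₈` is less than `√2`, in doubled coordinates: rounding to the
sublattice `D₈` is good enough, except at the deep holes `(½,…,½) + ℤ⁸`, which are within
distance `1` of the other coset of `D₈` in `E₈`. -/
lemma exists_e8_close (x : Fin 8 → ℤ) (m : ℤ) (hm : 0 < m) :
    ∃ z : Fin 8 → ℤ, (∀ i, 2 ∣ z i - z 7) ∧ 4 ∣ ∑ i, z i ∧
      ∑ i, (x i - m * z i) ^ 2 < 8 * m ^ 2 := by
  have hround : ∀ i, ∃ y : ℤ, |x i - m * (2 * y)| ≤ m := by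
    intro i
    refine ⟨(x i + m) / (2 * m), ?_⟩
    have h1 := Int.mul_ediv_add_emod (x i + m) (2 * m)
    have h2 := Int.emod_nonneg (x i + m) (by omega : 2 * m ≠ 0)
    have h3 := Int.emod_lt_of_pos (x i + m) (by omega : 0 < 2 * m)
    rw [abs_le]
    constructor <;> linarith
  choose y hy using hround
  set t : Fin 8 → ℤ := fun i => x i - m * (2 * y i) with ht
  have hy' : ∀ i, |t i| ≤ m := hy
  by_cases hall : ∀ i, |t i| = m
  · -- every coordinate of `x / m` is an odd integer
    have hodd : ∀ i, ∃ s, x i = m * (2 * s + 1) := by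
      intro i
      rcases (abs_eq hm.le).1 (hall i) with h | h
      · exact ⟨y i, by simp only [ht] at h; linear_combination h⟩
      · exact ⟨y i - 1, by simp only [ht] at h; linear_combination h⟩
    choose s hs using hodd
    rcases Int.even_or_odd' (∑ i, s i) with ⟨k, hk | hk⟩
    · refine ⟨fun i => 2 * s i + 1, fun i => ⟨s i - s 7, by ring⟩, ?_, ?_⟩
      · rw [Fin.sum_univ_eight] at hk ⊢
        omega
      · simp only [hs, sub_self]
        simp [hm]
    · refine ⟨fun i => 2 * s i + 1 - (if i = 0 then 2 else 0), fun i => ?_, ?_, ?_⟩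
      · dsimp only
        split_ifs <;> omega
      · rw [Fin.sum_univ_eight] at hk ⊢
        simp
        omega
      · have : ∀ i : Fin 8, (x i - m * (2 * s i + 1 - (if i = 0 then 2 else 0))) ^ 2 =
            if i = 0 then 4 * m ^ 2 else 0 := by
          intro i
          rw [hs i]
          split_ifs <;> ring
        simp only [this, Finset.sum_ite_eq', Finset.mem_univ, if_true]
        nlinarith
  · have hsq : ∀ i, t i ^ 2 ≤ m ^ 2 := fun i => sq_le_sq' (abs_le.1 (hy' i)).1 (abs_le.1 (hy' i)).2
    have hsum : ∑ i, t i ^ 2 < 8 * m ^ 2 := by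
      push Not at hall
      obtain ⟨j, hj⟩ := hall
      have hlt : t j ^ 2 < m ^ 2 := by
        rw [← sq_abs]
        exact pow_lt_pow_left₀ (lt_of_le_of_ne (hy' j) hj) (abs_nonneg _) two_ne_zero
      calc ∑ i, t i ^ 2 < ∑ _i : Fin 8, m ^ 2 :=
            Finset.sum_lt_sum (fun i _ => hsq i) ⟨j, Finset.mem_univ _, hlt⟩
        _ = 8 * m ^ 2 := by simp
    rcases Int.even_or_odd' (∑ i, y i) with ⟨k, hk | hk⟩
    · refine ⟨fun i => 2 * y i, fun i => ⟨y i - y 7, by ring⟩, ?_, hsum⟩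
      rw [← Finset.mul_sum, hk]; exact ⟨k, by ring⟩
    · -- wrong parity: round the coordinate with the largest error the other way
      obtain ⟨j, -, hj⟩ := Finset.exists_max_image Finset.univ (fun i => |t i|) ⟨0, by simp⟩
      obtain ⟨ε, hε, hεt⟩ : ∃ ε : ℤ, (ε = 1 ∨ ε = -1) ∧ ε * t j = |t j| := by
        rcases abs_choice (t j) with h | h
        · exact ⟨1, .inl rfl, by rw [h, one_mul]⟩
        · exact ⟨-1, .inr rfl, by rw [h, neg_one_mul]⟩
      have hε2 : ε ^ 2 = 1 := by rcases hε with rfl | rfl <;> norm_num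
      refine ⟨fun i => 2 * y i + if i = j then 2 * ε else 0, fun i => ?_, ?_, ?_⟩
      · dsimp only
        split_ifs <;> omega
      · rw [Finset.sum_add_distrib, ← Finset.mul_sum, hk]
        simp
        omega
      · have : ∀ i : Fin 8, (x i - m * (2 * y i + if i = j then 2 * ε else 0)) ^ 2 =
            t i ^ 2 + if i = j then 4 * m ^ 2 - 4 * m * |t j| else 0 := by
          intro i
          split_ifs with h
          · subst h
            rw [← hεt]
            simp only [ht]
            linear_combination 4 * m ^ 2 * hε2
          · simp only [ht]; ring
        simp only [this, Finset.sum_add_distrib]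
        simp only [Finset.sum_ite_eq', Finset.mem_univ, if_true]
        rcases (hy' j).lt_or_eq with hlt | heq
        · have hle : ∑ i, t i ^ 2 ≤ 8 * |t j| ^ 2 := by
            calc ∑ i, t i ^ 2 ≤ ∑ _i : Fin 8, |t j| ^ 2 :=
                  Finset.sum_le_sum fun i hi => by
                    rw [← sq_abs]; exact pow_le_pow_left₀ (abs_nonneg _) (hj i hi) 2
              _ = 8 * |t j| ^ 2 := by simp
          nlinarith [abs_nonneg (t j)]
        · rw [heq]; linarith

/-- The covering radius bound in simple-root coordinates. -/
lemma exists_e8Form_lt (v : Fin 8 → ℤ) (m : ℤ) (hm : m ≠ 0) :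
    ∃ w, e8Form (v - m • w) (v - m • w) < 2 * m ^ 2 := by
  have key : ∀ n : ℤ, 0 < n → ∃ w, e8Form (v - n • w) (v - n • w) < 2 * n ^ 2 := by
    intro n hn
    obtain ⟨z, h1, h2, h3⟩ := exists_e8_close (e8Coord v) n hn
    obtain ⟨w, rfl⟩ := exists_e8Coord_eq z h1 h2
    refine ⟨w, ?_⟩
    have := sum_e8Coord_sq (v - n • w)
    simp only [e8Coord_sub_smul] at this
    linarith
  rcases hm.lt_or_gt with h | h
  · obtain ⟨w, hw⟩ := key (-m) (by omega)
    exact ⟨-w, by simpa using hw⟩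
  · exact key m h

/-! ### Isotropic vectors of `M` -/

/-- The swap of the two isotropic basis vectors of `U(2)`. -/
def swapU (x : J10 → ℤ) : J10 → ℤ :=
  Sum.elim ![x (.inl 1), x (.inl 0)] (fun i => x (.inr i))

lemma MBilin_swapU (x y : J10 → ℤ) : MBilin (swapU x) (swapU y) = MBilin x y := by
  simp [MBilin_apply, swapU]; ring

lemma swapU_swapU (x : J10 → ℤ) : swapU (swapU x) = x := by
  ext i
  rcases i with i | i
  · fin_cases i <;> simp [swapU]
  · simp [swapU]

/-- The Eichler transvection of `U(2) ⊕ E₈(-2)` which fixes the second isotropic basis vector of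
`U(2)` and acts on `E₈` through `w`. -/
def eichler (w : Fin 8 → ℤ) (x : J10 → ℤ) : J10 → ℤ :=
  Sum.elim ![x (.inl 0),
    x (.inl 1) - e8Form (fun i => x (.inr i)) w + x (.inl 0) * e8HalfNorm w]
    (fun i => x (.inr i) - x (.inl 0) * w i)

lemma MBilin_eichler (w : Fin 8 → ℤ) (x y : J10 → ℤ) :
    MBilin (eichler w x) (eichler w y) = MBilin x y := by
  simp [MBilin_apply, eichler, e8Form_apply, e8HalfNorm]; ring

lemma eichler_neg_eichler (w : Fin 8 → ℤ) (x : J10 → ℤ) : eichler (-w) (eichler w x) = x := by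
  ext i
  rcases i with i | i
  · fin_cases i <;> simp [eichler, e8Form_apply, e8HalfNorm]
    ring
  · simp [eichler]

/-- The orthogonal complement of every isotropic vector contains a copy of `E₈(-2)`. By Euclidean
descent on the first coordinate `m`: an Eichler transvection replaces the `E₈`-part `v` by a vector
of norm less than `2 m ^ 2`, which forces the second coordinate to be smaller than `m` in absolute
value, and the two coordinates can then be swapped. -/
lemma exists_E8_orthogonal (n : ℕ) : ∀ e : J10 → ℤ, (e (.inl 0)).natAbs = n → MBilin e e = 0 →
    ∃ α : Fin 8 → J10 → ℤ, (∀ i j, MBilin (α i) (α j) = ((-2 : ℤ) • CartanMatrix.E₈) i j) ∧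
      ∀ i, MBilin (α i) e = 0 := by
  induction n using Nat.strong_induction_on with
  | _ n ih =>
    intro e hn he
    by_cases h0 : e (.inl 0) = 0
    · have hv : (fun i => e (.inr i)) = (0 : Fin 8 → ℤ) := by
        apply eq_zero_of_e8Form_self
        rw [MBilin_apply, h0] at he
        linarith
      refine ⟨fun i => Pi.single (.inr i) 1, fun i j => ?_, fun i => ?_⟩
      · rw [MBilin, Matrix.toBilin'_single]
        rfl
      · rw [MBilin_apply, hv, h0]
        simp [e8Form]
    · obtain ⟨w, hw⟩ := exists_e8Form_lt (fun i => e (.inr i)) (e (.inl 0)) h0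
      have he' : MBilin (eichler w e) (eichler w e) = 0 := by rw [MBilin_eichler, he]
      obtain ⟨α, h1, h2⟩ := ih _ (by
        have h := he'
        rw [MBilin_apply] at h
        have hvec : (fun i => eichler w e (.inr i)) = (fun i => e (.inr i)) - e (.inl 0) • w := by
          ext i; simp [eichler]
        have hfst : eichler w e (.inl 0) = e (.inl 0) := by simp [eichler]
        rw [hvec, hfst] at h
        have hlt : e (.inl 0) * eichler w e (.inl 1) < e (.inl 0) * e (.inl 0) := by linarith
        have hnn : 0 ≤ e (.inl 0) * eichler w e (.inl 1) := by
          have h4 := sum_e8Coord_sq ((fun i => e (.inr i)) - e (.inl 0) • w)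
          have h5 := Finset.sum_nonneg (s := Finset.univ) fun i _ =>
            sq_nonneg (e8Coord ((fun i => e (.inr i)) - e (.inl 0) • w) i)
          linarith
        have h6 := Int.natAbs_lt_natAbs_of_nonneg_of_lt hnn hlt
        rw [Int.natAbs_mul, Int.natAbs_mul] at h6
        rw [← hn]
        exact lt_of_mul_lt_mul_left h6 (Nat.zero_le _))
        (swapU (eichler w e)) (by rfl) (by rw [MBilin_swapU, he'])
      have hinv : eichler (-w) (swapU (swapU (eichler w e))) = e := by
        rw [swapU_swapU, eichler_neg_eichler]
      refine ⟨fun i => eichler (-w) (swapU (α i)), fun i j => ?_, fun i => ?_⟩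
      · rw [MBilin_eichler, MBilin_swapU, h1]
      · rw [← hinv, MBilin_eichler, MBilin_swapU, h2]

/-! ### Unimodularity and Gram matrices -/

lemma MBilin_self (x : J10 → ℤ) : ∃ a, MBilin x x = 4 * a :=
  ⟨x (.inl 0) * x (.inl 1) - e8HalfNorm (fun i => x (.inr i)), by
    rw [MBilin_apply, e8Form_self]; ring⟩

lemma MBilin_even (x y : J10 → ℤ) : ∃ a, MBilin x y = 2 * a :=
  ⟨_, by rw [MBilin_apply, ← mul_sub]⟩

/-- The lattice `M(1/2)` is unimodular: every integral functional is represented by a vector. -/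
lemma exists_MBilin_eq (φ : (J10 → ℤ) →ₗ[ℤ] ℤ) : ∃ w, ∀ x, MBilin w x = 2 * φ x := by
  have hE : CartanMatrix.E₈ * CartanMatrix.E₈⁻¹ = 1 :=
    Matrix.mul_nonsing_inv _ (by rw [CartanMatrix.E₈_det]; exact isUnit_one)
  have hU : UGram * UGram = 1 := by decide
  have hM : MGram * Matrix.fromBlocks UGram 0 0 (-CartanMatrix.E₈⁻¹) = (2 : ℤ) • 1 := by
    rw [MGram, Matrix.fromBlocks_multiply]
    simp only [Matrix.smul_mul, hU, Matrix.mul_neg, hE, Matrix.mul_zero, Matrix.zero_mul, add_zero,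
      zero_add, ← Matrix.fromBlocks_one, Matrix.fromBlocks_smul]
    simp
  refine ⟨Matrix.fromBlocks UGram 0 0 (-CartanMatrix.E₈⁻¹) *ᵥ fun i => φ (Pi.single i 1), ?_⟩
  intro x
  rw [MBilin_comm, MBilin, Matrix.toBilin'_apply', Matrix.mulVec_mulVec, hM, Matrix.smul_mulVec,
    Matrix.one_mulVec, dotProduct_smul]
  have hx : x = ∑ i, x i • (Pi.single i 1 : J10 → ℤ) := by
    ext j
    simp [Finset.sum_apply, Pi.single_apply]
  have hφ : φ x = ∑ i, x i * φ (Pi.single i 1) := by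
    conv_lhs => rw [hx, map_sum]
    simp only [map_smul, smul_eq_mul]
  rw [hφ]
  simp [dotProduct]

/-- A nondegenerate Gram matrix makes a spanning family of `S` a basis. -/
lemma isometricTo_of_span {ι : Type} [Fintype ι] [DecidableEq ι] (S : Submodule ℤ (J10 → ℤ))
    (G : Matrix ι ι ℤ) (hG : G.det ≠ 0) (c : ι → J10 → ℤ) (hc : ∀ i, c i ∈ S)
    (hgram : ∀ i j, MBilin (c i) (c j) = G i j)
    (hspan : ∀ x ∈ S, ∃ a : ι → ℤ, x = ∑ i, a i • c i) : IsometricTo S G := by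
  have hli : LinearIndependent ℤ (fun i => (⟨c i, hc i⟩ : S)) := by
    rw [Fintype.linearIndependent_iff]
    intro a ha
    have ha' : ∑ i, a i • c i = 0 := by
      have := congrArg Subtype.val ha
      simpa using this
    have h0 : G *ᵥ a = 0 := by
      ext i
      have h1 : MBilin (c i) (∑ j, a j • c j) = 0 := by rw [ha', map_zero]
      rw [map_sum] at h1
      simp only [map_smul, hgram, smul_eq_mul] at h1
      simpa [mulVec, dotProduct, mul_comm] using h1
    exact fun i => congrFun (Matrix.eq_zero_of_mulVec_eq_zero hG h0) i
  have hsp : ⊤ ≤ Submodule.span ℤ (Set.range fun i => (⟨c i, hc i⟩ : S)) := by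
    rintro ⟨x, hx⟩ -
    obtain ⟨a, rfl⟩ := hspan x hx
    rw [Submodule.mem_span_range_iff_exists_fun]
    exact ⟨a, Subtype.ext (by simp)⟩
  exact ⟨Basis.mk hli hsp, fun i j => by simp [hgram]⟩

/-- A family whose Gram matrix is that of `M` generates `M`, by comparing determinants. -/
lemma exists_coeff_of_gram (c : J10 → J10 → ℤ) (hc : ∀ i j, MBilin (c i) (c j) = MGram i j)
    (x : J10 → ℤ) : ∃ a : J10 → ℤ, x = ∑ i, a i • c i := by
  set Q : Matrix J10 J10 ℤ := (Matrix.of c)ᵀ with hQ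
  have h1 : Qᵀ * MGram * Q = MGram := by
    ext i j
    rw [← hc i j, MBilin, Matrix.toBilin'_apply', Matrix.dotProduct_mulVec]
    simp [hQ, Matrix.mul_apply, dotProduct, vecMul]
  have hM : MGram.det ≠ 0 := by
    rw [MGram, Matrix.det_fromBlocks_zero₂₁, Matrix.det_smul, Matrix.det_smul, CartanMatrix.E₈_det]
    simp [UGram, Matrix.det_fin_two]
  have h2 : Q.det * Q.det = 1 := by
    have := congrArg Matrix.det h1
    rw [Matrix.det_mul, Matrix.det_mul, Matrix.det_transpose] at this
    have h3 : MGram.det * (Q.det * Q.det) = MGram.det * 1 := by linear_combination this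
    exact mul_left_cancel₀ hM h3
  have hu : IsUnit Q.det := IsUnit.of_mul_eq_one _ h2
  refine ⟨Q⁻¹ *ᵥ x, ?_⟩
  have h4 : Q *ᵥ (Q⁻¹ *ᵥ x) = x := by
    rw [Matrix.mulVec_mulVec, Matrix.mul_nonsing_inv _ hu, Matrix.one_mulVec]
  conv_lhs => rw [← h4]
  ext i
  simp [mulVec, dotProduct, hQ, Finset.sum_apply, mul_comm]

lemma eq_zero_of_forall_MBilin (z : J10 → ℤ) (h : ∀ w, MBilin w z = 0) : z = 0 := by
  ext i
  obtain ⟨w, hw⟩ := exists_MBilin_eq (LinearMap.proj i)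
  have := hw z
  rw [h w, LinearMap.proj_apply] at this
  simpa using this.symm

/-! ### Even unimodular planes -/

/-- An integral binary quadratic form of discriminant `1` is a product of two integral linear
forms, which are coordinates of `ℤ²`. -/
lemma exists_factor (a b c : ℤ) (h : b ^ 2 - 4 * a * c = 1) :
    ∃ p q r s : ℤ, p * r = a ∧ p * s + q * r = b ∧ q * s = c ∧ q * r - p * s = 1 := by
  obtain ⟨k, hk | hk⟩ := Int.even_or_odd' b
  · exfalso
    have : 4 * (k ^ 2 - a * c) = 1 := by rw [hk] at h; linarith
    omega
  have hac : a * c = k * (k + 1) := by rw [hk] at h; linarith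
  by_cases h0 : a = 0 ∧ k = 0
  · exact ⟨0, 1, 1, c, by omega, by omega, by omega, by omega⟩
  · have hg : 0 < Int.gcd a k := by
      rw [Int.gcd_pos_iff]; tauto
    obtain ⟨r, s, hrs, ha, hks⟩ := Int.exists_gcd_one hg
    set p : ℤ := (Int.gcd a k : ℤ) with hp
    have hp0 : p ≠ 0 := by omega
    have h1 : r * c = s * (k + 1) := by
      apply mul_left_cancel₀ hp0
      linear_combination hac - c * ha + (k + 1) * hks
    have hdvd : r ∣ k + 1 :=
      (Int.isCoprime_iff_gcd_eq_one.2 hrs).dvd_of_dvd_mul_left ⟨c, h1.symm⟩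
    obtain ⟨q, hq⟩ := hdvd
    by_cases hr : r = 0
    · subst hr
      have hs0 : s ≠ 0 := by rintro rfl; simp at hrs
      have hk1 : k + 1 = 0 := by
        rcases mul_eq_zero.1 ((zero_mul c).symm.trans h1).symm with h2 | h2
        · exact absurd h2 hs0
        · exact h2
      exact ⟨1, -c, 0, -1, by omega, by omega, by omega, by omega⟩
    · refine ⟨p, q, r, s, by linarith, by linarith, ?_, by linarith⟩
      apply mul_left_cancel₀ hr
      rw [h1, hq]; ring

/-- A sublattice of rank two of `M` which is unimodular after rescaling the form by `1/2` is
isometric to `U(2)`: its Gram matrix has determinant `-4` because `M(1/2)` is even, so that the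
quadratic form splits into integral linear factors. -/
lemma exists_hyperbolic_pair (K : Submodule ℤ (J10 → ℤ)) (u v : J10 → ℤ) (hu : u ∈ K) (hv : v ∈ K)
    (hspan : ∀ x ∈ K, ∃ a b : ℤ, x = a • u + b • v)
    (k₀ k₁ : J10 → ℤ) (hk₀ : k₀ ∈ K) (hk₁ : k₁ ∈ K)
    (h00 : MBilin k₀ u = 2) (h01 : MBilin k₀ v = 0) (h10 : MBilin k₁ u = 0)
    (h11 : MBilin k₁ v = 2) :
    ∃ e ∈ K, ∃ f ∈ K, MBilin e e = 0 ∧ MBilin f f = 0 ∧ MBilin e f = 2 ∧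
      ∀ x ∈ K, ∃ a b : ℤ, x = a • e + b • f := by
  obtain ⟨a, ha⟩ := MBilin_self u
  obtain ⟨c, hc⟩ := MBilin_self v
  obtain ⟨b, hb⟩ := MBilin_even u v
  have hb' : MBilin v u = 2 * b := by rw [MBilin_comm, hb]
  have hdisc : b ^ 2 - 4 * a * c = 1 := by
    obtain ⟨s, t, rfl⟩ := hspan k₀ hk₀
    obtain ⟨s', t', rfl⟩ := hspan k₁ hk₁
    simp only [map_add, map_smul, LinearMap.add_apply, LinearMap.smul_apply, smul_eq_mul, ha, hb,
      hb', hc] at h00 h01 h10 h11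
    have e1 : 2 * a * s + b * t = 1 := by linarith
    have e2 : b * s + 2 * c * t = 0 := by linarith
    have e3 : 2 * a * s' + b * t' = 0 := by linarith
    have e4 : b * s' + 2 * c * t' = 1 := by linarith
    have e5 : (4 * a * c - b ^ 2) * (s * t' - t * s') = 1 := by
      linear_combination (b * s' + 2 * c * t') * e1 - (2 * a * s' + b * t') * e2 + e4
    rcases Int.eq_one_or_neg_one_of_mul_eq_one e5 with h | h
    · -- a Gram determinant `4 * a * c - b ^ 2 = 1` is impossible modulo `4`
      exfalso
      rcases Int.even_or_odd' b with ⟨k, rfl | rfl⟩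
      · have : 4 * (a * c - k ^ 2) = 1 := by linarith
        omega
      · have : 4 * (a * c - k ^ 2 - k) = 2 := by linarith
        omega
    · linarith
  obtain ⟨p, q, r, s, e1, e2, e3, e4⟩ := exists_factor a b c hdisc
  refine ⟨-s • u + r • v, K.add_mem (K.smul_mem _ hu) (K.smul_mem _ hv), q • u + (-p) • v,
    K.add_mem (K.smul_mem _ hu) (K.smul_mem _ hv), ?_, ?_, ?_, ?_⟩
  · simp only [map_add, map_smul, LinearMap.add_apply, LinearMap.smul_apply, smul_eq_mul, ha, hb,
      hb', hc]
    rw [← e1, ← e2, ← e3]; ring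
  · simp only [map_add, map_smul, LinearMap.add_apply, LinearMap.smul_apply, smul_eq_mul, ha, hb,
      hb', hc]
    rw [← e1, ← e2, ← e3]; ring
  · simp only [map_add, map_smul, LinearMap.add_apply, LinearMap.smul_apply, smul_eq_mul, ha, hb,
      hb', hc]
    rw [← e1, ← e2, ← e3]
    linear_combination (2 * (q * r - p * s) + 2) * e4
  · intro x hx
    obtain ⟨m, n, rfl⟩ := hspan x hx
    refine ⟨m * p + n * q, m * r + n * s, ?_⟩
    ext i
    simp only [Pi.add_apply, Pi.smul_apply, smul_eq_mul]
    linear_combination (-m * u i - n * v i) * e4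

/-! ### Isometries with eigenvalue one -/

/-- In a decomposition `V = A ⊕ K` stable under `f`, with `1 - f` invertible on `A` and `f`
unipotent on `K`, the rank of `K` is the multiplicity of `1` as a root of the characteristic
polynomial of `f`, here equal to `2`. -/
lemma finrank_eq_two_of_charpoly {V : Type*} [AddCommGroup V] [Module.Free ℤ V] [Module.Finite ℤ V]
    (f : Module.End ℤ V) (A K : Submodule ℤ V) (h : IsCompl A K)
    (hA : ∀ x ∈ A, f x ∈ A) (hK : ∀ x ∈ K, f x ∈ K)
    (s : Module.End ℤ A) (hs : (1 - f.restrict hA) * s = 1)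
    (hnil : IsNilpotent (f.restrict hK - 1)) (p : ℤ[X]) (hp : p.eval 1 ≠ 0)
    (hf : f.charpoly = p * (X - C 1) ^ 2) : finrank ℤ K = 2 := by
  have h1 : f.charpoly = (f.restrict hA).charpoly * (f.restrict hK).charpoly := by
    let e := Submodule.prodEquivOfIsCompl A K h
    have hψ : (f.restrict hA).prodMap (f.restrict hK) = e.symm.conj f := by
      apply LinearMap.ext
      rintro ⟨x, y⟩
      rw [LinearEquiv.conj_apply]
      refine (LinearEquiv.eq_symm_apply e).2 ?_
      simp [e, Submodule.coe_prodEquivOfIsCompl']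
    rw [← LinearMap.charpoly_prodMap, hψ, LinearEquiv.charpoly_conj]
  have h2 : (f.restrict hK).charpoly = (X - C 1) ^ finrank ℤ K := by
    have h3 := hnil.charpoly_eq_X_pow_finrank
    have h4 := LinearMap.charpoly_sub_smul (f.restrict hK) 1
    rw [one_smul, h3] at h4
    have h5 := congrArg (fun q => q.comp (X - C 1)) h4
    simpa [Polynomial.comp_assoc] using h5.symm
  have h3 : (f.restrict hA).charpoly.eval 1 ≠ 0 := by
    rw [LinearMap.eval_charpoly]
    intro h0
    have h4 := congrArg LinearMap.det hs
    rw [map_mul, map_one] at h4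
    have h5 : LinearMap.det (1 - f.restrict hA) = 0 := by simpa using h0
    rw [h5, zero_mul] at h4
    exact zero_ne_one h4
  have h6 := hf.symm.trans h1
  rw [h2] at h6
  have hA0 : (f.restrict hA).charpoly ≠ 0 := fun h0 => h3 (by rw [h0, eval_zero])
  have hp0 : p ≠ 0 := fun h0 => hp (by rw [h0, eval_zero])
  have hX : ∀ n, (X - C (1 : ℤ)) ^ n ≠ 0 := fun n => pow_ne_zero _ (X_sub_C_ne_zero 1)
  have h7 := congrArg (rootMultiplicity 1) h6
  rw [rootMultiplicity_mul (mul_ne_zero hp0 (hX _)), rootMultiplicity_mul (mul_ne_zero hA0 (hX _)),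
    rootMultiplicity_X_sub_C_pow, rootMultiplicity_X_sub_C_pow,
    rootMultiplicity_eq_zero (show ¬ IsRoot p 1 from hp),
    rootMultiplicity_eq_zero (show ¬ IsRoot (f.restrict hA).charpoly 1 from h3)] at h7
  omega

/-- A unipotent isometry of a nondegenerate lattice of rank two is trivial: for `z = f x - x ≠ 0`,
the vector `z` would be orthogonal to the independent vectors `x` and `z`. -/
lemma apply_eq_self_of_unipotent (f : Module.End ℤ (J10 → ℤ))
    (hiso : ∀ x y, MBilin (f x) (f y) = MBilin x y) (A K : Submodule ℤ (J10 → ℤ)) (hAK : A ⊔ K = ⊤)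
    (hK : ∀ x ∈ K, f x ∈ K) (hK2 : ∀ x ∈ K, f (f x - x) = f x - x) (hrank : finrank ℤ K = 2)
    (horth : ∀ x ∈ A, ∀ y, f y = y → MBilin x y = 0) (x : J10 → ℤ) (hx : x ∈ K) : f x = x := by
  by_contra hne
  obtain ⟨z, hz⟩ : ∃ z, z = f x - x := ⟨_, rfl⟩
  have hz0 : z ≠ 0 := by rw [hz]; exact sub_ne_zero.2 hne
  have hfz : f z = z := by rw [hz]; exact hK2 x hx
  have hfx : f x = x + z := by rw [hz]; abel
  have hzK : z ∈ K := by rw [hz]; exact K.sub_mem (hK x hx) hx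
  have hzz : MBilin z z = 0 := by
    have := hiso x z
    rw [hfz, hfx, map_add, LinearMap.add_apply] at this
    linarith
  have hzx : MBilin z x = 0 := by
    have := hiso x x
    simp only [hfx, map_add, LinearMap.add_apply, hzz, MBilin_comm x z] at this
    linarith
  have hzy : ∀ y ∈ K, MBilin z y = 0 := by
    intro y hy
    have hdep : ¬ LinearIndependent ℤ (![⟨x, hx⟩, ⟨z, hzK⟩, ⟨y, hy⟩] : Fin 3 → K) := by
      intro hli
      have := hli.fintype_card_le_finrank
      rw [hrank] at this
      simp at this
    rw [Fintype.not_linearIndependent_iff] at hdep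
    obtain ⟨a, ha, i, hi⟩ := hdep
    have ha' : a 0 • x + a 1 • z + a 2 • y = 0 := by
      have := congrArg Subtype.val ha
      simpa [Fin.sum_univ_three] using this
    have hc : a 2 ≠ 0 := by
      intro h2
      rw [h2, zero_smul, add_zero] at ha'
      have h3 : a 0 • z = 0 := by
        have h4 := congrArg f ha'
        rw [map_add, map_smul, map_smul, hfz, hfx, map_zero, smul_add] at h4
        have h5 : a 0 • x + a 0 • z + a 1 • z = (a 0 • x + a 1 • z) + a 0 • z := by abel
        rwa [h5, ha', zero_add] at h4
      have h0 : a 0 = 0 := (smul_eq_zero.1 h3).resolve_right hz0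
      rw [h0, zero_smul, zero_add] at ha'
      have h1 : a 1 = 0 := (smul_eq_zero.1 ha').resolve_right hz0
      fin_cases i
      · exact hi h0
      · exact hi h1
      · exact hi h2
    have h3 := congrArg (MBilin z) ha'
    simp only [map_add, map_smul, hzz, hzx, smul_eq_mul, mul_zero, zero_add, map_zero] at h3
    exact (mul_eq_zero.1 h3).resolve_left hc
  refine hz0 (eq_zero_of_forall_MBilin z fun w => ?_)
  obtain ⟨y, hy, k, hk, rfl⟩ := Submodule.mem_sup.1 (hAK ▸ Submodule.mem_top : w ∈ A ⊔ K)
  rw [map_add, LinearMap.add_apply, horth y hy z hfz, MBilin_comm k z, hzy k hk, add_zero]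

/-- An isometry `f` fixing `y` satisfies `⟨q(f) x, y⟩ = q(1) ⟨x, y⟩` for every polynomial `q`. -/
lemma MBilin_aeval (f : Module.End ℤ (J10 → ℤ))
    (hiso : ∀ x y, MBilin (f x) (f y) = MBilin x y) (y : J10 → ℤ) (hy : f y = y) (q : ℤ[X]) :
    ∀ x, MBilin (aeval f q x) y = q.eval 1 * MBilin x y := by
  have hpow : ∀ n x, MBilin ((f ^ n) x) y = MBilin x y := by
    intro n
    induction n with
    | zero => simp
    | succ n ih =>
      intro x
      rw [pow_succ', Module.End.mul_apply]
      conv_lhs => rw [← hy]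
      rw [hiso, ih]
  intro x
  induction q using Polynomial.induction_on' with
  | add p q hp hq => simp [hp, hq, add_mul]
  | monomial n a => simp [aeval_monomial, hpow, -zsmul_eq_mul]

/-! ### The orthogonal decomposition -/

/-- If a sublattice of an orthogonal decomposition of `M` is spanned by a hyperbolic pair for
`U(2)`, then the other one is isometric to `E₈(-2)`. The copy of `E₈(-2)` orthogonal to `e` is moved
into the complement of the pair by adding multiples of `e`. -/
lemma isometricTo_E8 (A K : Submodule ℤ (J10 → ℤ)) (hAK : A ⊔ K = ⊤)
    (horth : ∀ x ∈ A, ∀ y ∈ K, MBilin x y = 0) (e f : J10 → ℤ) (he : e ∈ K) (hf : f ∈ K)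
    (hee : MBilin e e = 0) (hff : MBilin f f = 0) (hef : MBilin e f = 2)
    (hspan : ∀ x ∈ K, ∃ a b : ℤ, x = a • e + b • f) :
    IsometricTo A ((-2 : ℤ) • CartanMatrix.E₈) := by
  obtain ⟨α, hα, hαe⟩ := exists_E8_orthogonal _ e rfl hee
  choose t ht using fun i => MBilin_even (α i) f
  have hfe : MBilin f e = 2 := by rw [MBilin_comm, hef]
  have heα : ∀ i, MBilin e (α i) = 0 := fun i => by rw [MBilin_comm, hαe]
  set n : Fin 8 → J10 → ℤ := fun i => α i - t i • e with hn
  have hne : ∀ i, MBilin (n i) e = 0 := fun i => by simp [hn, hαe, hee, -zsmul_eq_mul]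
  have hnf : ∀ i, MBilin (n i) f = 0 := fun i => by simp [hn, ht, hef, mul_comm, -zsmul_eq_mul]
  have hen : ∀ i, MBilin e (n i) = 0 := fun i => by rw [MBilin_comm, hne]
  have hfn : ∀ i, MBilin f (n i) = 0 := fun i => by rw [MBilin_comm, hnf]
  have hnn : ∀ i j, MBilin (n i) (n j) = ((-2 : ℤ) • CartanMatrix.E₈) i j := fun i j => by
    rw [← hα i j]; simp [hn, hαe, heα, hee, -zsmul_eq_mul]
  have hnA : ∀ i, n i ∈ A := by
    intro i
    obtain ⟨y, hy, k, hk, hyk⟩ := Submodule.mem_sup.1 (hAK ▸ Submodule.mem_top : n i ∈ A ⊔ K)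
    obtain ⟨a, b, rfl⟩ := hspan k hk
    have h1 := hne i
    have h2 := hnf i
    rw [← hyk] at h1 h2
    simp [horth y hy e he, hee, hfe, -zsmul_eq_mul] at h1
    simp [horth y hy f hf, hff, hef, -zsmul_eq_mul] at h2
    rw [← hyk, h1, h2]
    simpa using hy
  refine isometricTo_of_span A _ ?_ n hnA hnn fun x hx => ?_
  · rw [Matrix.det_smul, CartanMatrix.E₈_det]; norm_num
  · -- the hyperbolic pair and the family `n` have the Gram matrix of `M`, so they generate it
    obtain ⟨a, ha⟩ := exists_coeff_of_gram (Sum.elim ![e, f] n) (by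
      rintro (i | i) (j | j)
      · fin_cases i <;> fin_cases j <;> simp [MGram, UGram, hee, hff, hef, hfe]
      · fin_cases i <;> simp [MGram, hen, hfn]
      · fin_cases j <;> simp [MGram, hne, hnf]
      · exact hnn i j) x
    simp only [Fintype.sum_sum_type, Sum.elim_inl, Sum.elim_inr, Fin.sum_univ_two] at ha
    have h1 := horth x hx e he
    have h2 := horth x hx f hf
    rw [ha] at h1 h2
    simp [hee, hfe, hne, -zsmul_eq_mul] at h1
    simp [hff, hef, hnf, -zsmul_eq_mul] at h2
    refine ⟨fun i => a (.inr i), ?_⟩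
    rw [h1, h2] at ha
    simpa using ha

/-- The decomposition for an isometry given as an endomorphism. The sublattice that splits off
formally is `K = ker (f - 1) ^ 2`, because `Φ₁₅(1) = 1` makes `Φ₁₅` and `(X - 1) ^ 2` coprime over
`ℤ`; it coincides with `ker (f - 1)` since `f` is trivial on it. -/
lemma isometry_decomposition (f : Module.End ℤ (J10 → ℤ))
    (hiso : ∀ x y, MBilin (f x) (f y) = MBilin x y)
    (hchar : f.charpoly = cyclotomic 15 ℤ * (X - C 1) ^ 2) :
    (∀ x ∈ LinearMap.ker (aeval f (cyclotomic 15 ℤ)), ∀ y ∈ LinearMap.ker (f - 1),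
      MBilin x y = 0) ∧
    LinearMap.ker (aeval f (cyclotomic 15 ℤ)) ⊓ LinearMap.ker (f - 1) = ⊥ ∧
    LinearMap.ker (aeval f (cyclotomic 15 ℤ)) ⊔ LinearMap.ker (f - 1) = ⊤ ∧
    IsometricTo (LinearMap.ker (aeval f (cyclotomic 15 ℤ))) ((-2 : ℤ) • CartanMatrix.E₈) ∧
    IsometricTo (LinearMap.ker (f - 1)) ((2 : ℤ) • UGram) := by
  set Φ : ℤ[X] := cyclotomic 15 ℤ with hΦ
  have hΦ1 : Φ.eval 1 = 1 := by
    apply eval_one_cyclotomic_not_prime_pow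
    intro p hp k hk
    -- `15` is not a prime power
    have h3 : 3 ∣ p ^ k := by rw [hk]; norm_num
    have h5 : 5 ∣ p ^ k := by rw [hk]; norm_num
    have h3' := (Nat.prime_dvd_prime_iff_eq Nat.prime_three hp).1 (Nat.prime_three.dvd_of_dvd_pow h3)
    have h5' := (Nat.prime_dvd_prime_iff_eq Nat.prime_five hp).1 (Nat.prime_five.dvd_of_dvd_pow h5)
    omega
  obtain ⟨b, hb⟩ : ∃ b, Φ - 1 = (X - C 1) * b := dvd_iff_isRoot.2 (by simp [hΦ1])
  have hcop : IsCoprime Φ ((X - C 1) ^ 2) := by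
    refine IsCoprime.pow_right ⟨1, -b, ?_⟩
    linear_combination hb
  set A := LinearMap.ker (aeval f Φ) with hA
  set K := LinearMap.ker (aeval f ((X - C (1 : ℤ)) ^ 2)) with hKdef
  have hcompl : IsCompl A K := by
    refine ⟨disjoint_ker_aeval_of_isCoprime f hcop, codisjoint_iff.2 ?_⟩
    rw [hA, hKdef, sup_ker_aeval_eq_ker_aeval_mul_of_coprime f hcop, ← hchar,
      LinearMap.aeval_self_charpoly, LinearMap.ker_zero]
  have hcomm : ∀ (q : ℤ[X]) x, aeval f q (f x) = f (aeval f q x) := by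
    intro q x
    have : aeval f (q * X) x = aeval f (X * q) x := by rw [mul_comm]
    simpa using this
  have hAf : ∀ x ∈ A, f x ∈ A := fun x hx => by
    rw [hA, LinearMap.mem_ker] at hx ⊢; rw [hcomm, hx, map_zero]
  have hKf : ∀ x ∈ K, f x ∈ K := fun x hx => by
    rw [hKdef, LinearMap.mem_ker] at hx ⊢; rw [hcomm, hx, map_zero]
  have hK2 : ∀ x ∈ K, f (f x - x) = f x - x := by
    intro x hx
    rw [hKdef, LinearMap.mem_ker] at hx
    rw [← sub_eq_zero]
    simpa [pow_two] using hx
  have hAb : ∀ x ∈ A, aeval f b x ∈ A := fun x hx => by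
    rw [hA, LinearMap.mem_ker] at hx ⊢
    rw [← Module.End.mul_apply, ← map_mul, mul_comm, map_mul, Module.End.mul_apply, hx, map_zero]
  have hrank : finrank ℤ K = 2 := by
    refine finrank_eq_two_of_charpoly f A K hcompl hAf hKf ((aeval f b).restrict hAb) ?_ ?_ Φ
      (by rw [hΦ1]; exact one_ne_zero) hchar
    · ext1 ⟨x, hx⟩
      apply Subtype.ext
      rw [hA, LinearMap.mem_ker] at hx
      have h1 := congrArg (fun q => aeval f q x) hb
      simp [hx] at h1
      simp
      rw [← neg_sub, ← h1, neg_neg]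
    · refine ⟨2, ?_⟩
      ext1 ⟨x, hx⟩
      apply Subtype.ext
      have := hK2 x hx
      rw [← sub_eq_zero] at this
      simpa [pow_two] using this
  have horth : ∀ x ∈ A, ∀ y, f y = y → MBilin x y = 0 := by
    intro x hx y hy
    have := MBilin_aeval f hiso y hy Φ x
    rw [hA, LinearMap.mem_ker] at hx
    rwa [hx, hΦ1, map_zero, LinearMap.zero_apply, one_mul, eq_comm] at this
  have hfix := apply_eq_self_of_unipotent f hiso A K hcompl.sup_eq_top hKf hK2 hrank horth
  have hK1 : LinearMap.ker (f - 1) = K := by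
    ext x
    rw [LinearMap.mem_ker, LinearMap.sub_apply, Module.End.one_apply, sub_eq_zero]
    refine ⟨fun h => ?_, hfix x⟩
    rw [hKdef, LinearMap.mem_ker]
    simp [pow_two, h]
  have horthK : ∀ x ∈ A, ∀ y ∈ K, MBilin x y = 0 := fun x hx y hy => horth x hx y (hfix y hy)
  rw [hK1]
  -- `K` is unimodular after rescaling because it is an orthogonal direct summand
  have hdual : ∀ φ : K →ₗ[ℤ] ℤ, ∃ k ∈ K, ∀ x (hx : x ∈ K), MBilin k x = 2 * φ ⟨x, hx⟩ := by
    intro φ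
    obtain ⟨w, hw⟩ := exists_MBilin_eq (φ ∘ₗ K.projectionOnto A hcompl.symm)
    obtain ⟨y, hy, k, hk, rfl⟩ := Submodule.mem_sup.1
      (hcompl.sup_eq_top ▸ Submodule.mem_top : w ∈ A ⊔ K)
    refine ⟨k, hk, fun x hx => ?_⟩
    have h1 := hw x
    rw [map_add, LinearMap.add_apply, horthK y hy x hx, zero_add] at h1
    rw [h1, LinearMap.comp_apply]
    congr 2
    exact Submodule.projectionOnto_apply_left hcompl.symm ⟨x, hx⟩
  obtain ⟨B⟩ : Nonempty (Basis (Fin 2) ℤ K) := ⟨finBasisOfFinrankEq ℤ K hrank⟩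
  obtain ⟨k₀, hk₀, hφ₀⟩ := hdual (B.coord 0)
  obtain ⟨k₁, hk₁, hφ₁⟩ := hdual (B.coord 1)
  obtain ⟨e, he, e', he', hee, hee', hpair, hspan⟩ := exists_hyperbolic_pair K (B 0) (B 1) (B 0).2
    (B 1).2 (fun x hx => ⟨B.repr ⟨x, hx⟩ 0, B.repr ⟨x, hx⟩ 1, by
      have h := B.sum_repr ⟨x, hx⟩
      rw [Fin.sum_univ_two] at h
      exact (congrArg Subtype.val h).symm⟩) k₀ k₁ hk₀ hk₁
    (by rw [hφ₀ _ (B 0).2]; simp) (by rw [hφ₀ _ (B 1).2]; simp)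
    (by rw [hφ₁ _ (B 0).2]; simp) (by rw [hφ₁ _ (B 1).2]; simp)
  refine ⟨horthK, hcompl.inf_eq_bot, hcompl.sup_eq_top,
    isometricTo_E8 A K hcompl.sup_eq_top horthK e e' he he' hee hee' hpair hspan,
    isometricTo_of_span K _ (by decide) ![e, e'] (by simp [Fin.forall_fin_two, he, he']) ?_ ?_⟩
  · intro i j
    have := MBilin_comm e' e
    fin_cases i <;> fin_cases j <;> simp [UGram, hee, hee', hpair, this]
  · intro x hx
    obtain ⟨m, n, rfl⟩ := hspan x hx
    exact ⟨![m, n], by simp [Fin.sum_univ_two]⟩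

/-- If an isometry `g` of `M = U(2) ⊕ E₈(-2)` has characteristic polynomial `Φ₁₅ · Φ₁²`,
then `M` is the internal orthogonal direct sum of `M₁₅ = ker Φ₁₅(g)` and
`M₁ = ker (g - 1)`; moreover `M₁₅ ≅ E₈(-2)` and `M₁ ≅ U(2)`. -/
theorem M_ortho_direct_sum_ker_phi15_ker_sub_one
    (g : Matrix J10 J10 ℤ)
    (hunit : IsUnit g.det)
    (hisom : gᵀ * MGram * g = MGram)
    (hchar : g.charpoly = cyclotomic 15 ℤ * cyclotomic 1 ℤ ^ 2) :
    (∀ x ∈ LinearMap.ker (aeval g (cyclotomic 15 ℤ)).mulVecLin,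
      ∀ y ∈ LinearMap.ker (g - 1).mulVecLin, MBilin x y = 0) ∧
    LinearMap.ker (aeval g (cyclotomic 15 ℤ)).mulVecLin ⊓
      LinearMap.ker (g - 1).mulVecLin = ⊥ ∧
    LinearMap.ker (aeval g (cyclotomic 15 ℤ)).mulVecLin ⊔
      LinearMap.ker (g - 1).mulVecLin = ⊤ ∧
    IsometricTo (LinearMap.ker (aeval g (cyclotomic 15 ℤ)).mulVecLin)
      ((-2 : ℤ) • CartanMatrix.E₈) ∧
    IsometricTo (LinearMap.ker (g - 1).mulVecLin) ((2 : ℤ) • UGram) := by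
  have hlin : ∀ q : ℤ[X], (aeval g q).mulVecLin = aeval g.mulVecLin q := fun q =>
    (aeval_algHom_apply (Matrix.toLinAlgEquiv' (R := ℤ) (n := J10)).toAlgHom g q).symm
  have hsub : (g - 1).mulVecLin = g.mulVecLin - 1 := by
    refine LinearMap.ext fun x => ?_
    simp [-mulVecBilin_apply]
  rw [hlin, hsub]
  apply isometry_decomposition
  · intro x y
    simp only [MBilin, Matrix.toBilin'_apply', Matrix.mulVecLin_apply]
    conv_rhs => rw [← hisom]
    rw [← Matrix.mulVec_mulVec, ← Matrix.mulVec_mulVec, Matrix.dotProduct_mulVec x gᵀ,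
      Matrix.vecMul_transpose]
  · rw [← Matrix.toLin'_apply', Matrix.charpoly_toLin', hchar, cyclotomic_one, C_1]
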